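/- For every polygonal curve Q ∈ X^d_ℓ there exist indices 1 ≤ i < j ≤ m such that r_Q ⊆ r_{i,j}, where r_Q ∈ R and r_{i,j} ∈ R̃_0. Consequently, if R admits a set cover of size k, then R̃_0 admits a set cover of size at most k. -/

import Mathlib

/-! The Fréchet distance is symmetric, and it satisfies the triangle inequality on curves that are
bounded on `[0,1]`; boundedness keeps the real-valued supremum in `frechetDist` from taking its junk
value `0`. If `d_F(Q, P[t_i,t_j]) ≤ Δ`, then also `d_F(μ(i,j), P[t_i,t_j]) ≤ Δ`, so every subcurve
of `P` within `Δ` of `Q` is within `3Δ` of `μ(i,j)`, by way of `Q` and `P[t_i,t_j]`. Hence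
`r_Q ⊆ r_{i,j}`, and replacing each member of a cover of `R` by such a superset gives a cover of
`R̃₀`. -/

open Set

noncomputable section

/-- Points in `ℝ^d`. -/
abbrev Pt (d : ℕ) : Type := EuclideanSpace ℝ (Fin d)

/-- A reparametrization: a continuous strictly increasing bijection of `[0,1]` onto itself. -/
def IsReparam (γ : ℝ → ℝ) : Prop :=
  ContinuousOn γ (Icc 0 1) ∧ StrictMonoOn γ (Icc 0 1) ∧ γ '' Icc 0 1 = Icc 0 1

/-- The Fréchet distance `d_F(P,Q) = inf_γ sup_{t ∈ [0,1]} ‖P(γ(t)) - Q(t)‖`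
(only the values of the curves on `[0,1]` are relevant). -/
def frechetDist {d : ℕ} (P Q : ℝ → Pt d) : ℝ :=
  ⨅ γ : {γ : ℝ → ℝ // IsReparam γ}, ⨆ s : Icc (0:ℝ) 1, ‖P (γ.1 s.1) - Q s.1‖

/-- The linearly parametrized line segment from `a` to `b`. -/
def seg {d : ℕ} (a b : Pt d) : ℝ → Pt d := fun s => (1 - s) • a + s • b

/-- The subcurve `P[a,b]` of `P`, linearly reparametrized over `[0,1]`. -/
def subcurve {d : ℕ} (P : ℝ → Pt d) (a b : ℝ) : ℝ → Pt d := fun s => P (a + s * (b - a))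

/-- The polygonal curve with vertex sequence `pts 0, …, pts n`, uniformly
parametrized over `[0,1]`. -/
def polyline {d n : ℕ} (pts : Fin (n + 1) → Pt d) : ℝ → Pt d := fun s =>
  if h : n = 0 then pts 0
  else
    let i : ℕ := min ⌊s * n⌋₊ (n - 1)
    have hi : i < n := lt_of_le_of_lt (min_le_right _ _) (by omega)
    (1 - (s * n - i)) • pts ⟨i, hi.trans n.lt_succ_self⟩ +
      (s * n - i) • pts ⟨i + 1, Nat.succ_lt_succ hi⟩

/-- `f ∈ 𝕏^d_ℓ`: `f` is a polygonal curve with at most `ℓ` vertices. -/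
def IsPolygonal {d : ℕ} (f : ℝ → Pt d) (ℓ : ℕ) : Prop :=
  ∃ n : ℕ, n + 1 ≤ ℓ ∧ ∃ pts : Fin (n + 1) → Pt d, f = polyline pts

/-- Concatenation of two curves (each parametrized over `[0,1]`). -/
def concat {d : ℕ} (f g : ℝ → Pt d) : ℝ → Pt d := fun s =>
  if s ≤ 1 / 2 then f (2 * s) else g (2 * s - 1)

/-- `CostLE P m t C Δ` states that the clustering cost satisfies `φ(P,C) ≤ Δ`:
there is a family `I` of index pairs `(i,j)`, `1 ≤ i < j ≤ m`, with
`⋃_{(i,j) ∈ I} [t i, t j] = [0,1]`, such that every corresponding subcurve is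
within Fréchet distance `Δ` of some center in `C`. -/
def CostLE {d : ℕ} (P : ℝ → Pt d) (m : ℕ) (t : ℕ → ℝ) (C : Set (ℝ → Pt d)) (Δ : ℝ) : Prop :=
  ∃ I : Set (ℕ × ℕ),
    (∀ q ∈ I, 1 ≤ q.1 ∧ q.1 < q.2 ∧ q.2 ≤ m) ∧
    (⋃ q ∈ I, Icc (t q.1) (t q.2)) = Icc (0:ℝ) 1 ∧
    ∀ q ∈ I, ∃ c ∈ C, frechetDist (subcurve P (t q.1) (t q.2)) c ≤ Δ

/-- The set `r_Q` of the set system `R` (ground set `{1,…,m−1}`):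
`r_Q = {z : ∃ i ≤ z < j, d_F(Q, P[t_i,t_j]) ≤ Δ}`. -/
def rSet {d : ℕ} (P : ℝ → Pt d) (m : ℕ) (t : ℕ → ℝ) (Δ : ℝ) (Q : ℝ → Pt d) : Set ℕ :=
  {z | 1 ≤ z ∧ z < m ∧ ∃ i j, 1 ≤ i ∧ i ≤ z ∧ z < j ∧ j ≤ m ∧
    frechetDist Q (subcurve P (t i) (t j)) ≤ Δ}

/-- The set `r_{i,j}` of the set system `R̃₀`, defined from the simplifications `μ`. -/
def rTilde0 {d : ℕ} (P : ℝ → Pt d) (m : ℕ) (t : ℕ → ℝ) (Δ : ℝ)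
    (μ : ℕ → ℕ → ℝ → Pt d) (i j : ℕ) : Set ℕ :=
  {z | 1 ≤ z ∧ z < m ∧ ∃ i' j', 1 ≤ i' ∧ i' ≤ z ∧ z < j' ∧ j' ≤ m ∧
    frechetDist (subcurve P (t i') (t j')) (μ i j) ≤ 3 * Δ}

open Bornology

section Reparam

variable {γ : ℝ → ℝ}

/-- The order automorphism of `[0,1]` that a reparametrization restricts to. -/
def IsReparam.toOrderIso (hγ : IsReparam γ) : unitInterval ≃o unitInterval :=
  (hγ.2.1.orderIso γ (Icc 0 1)).trans (OrderIso.setCongr _ _ hγ.2.2)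

lemma IsReparam.coe_toOrderIso_apply (hγ : IsReparam γ) (s : unitInterval) :
    (hγ.toOrderIso s : ℝ) = γ s :=
  rfl

lemma IsReparam.of_orderIso (e : unitInterval ≃o unitInterval) :
    IsReparam (IccExtend zero_le_one fun s ↦ (e s : ℝ)) := by
  have hmono : StrictMono fun s ↦ (e s : ℝ) := e.strictMono
  refine ⟨(continuous_subtype_val.comp e.continuous).Icc_extend'.continuousOn,
    hmono.strictMonoOn_IccExtend zero_le_one, ?_⟩
  calc IccExtend zero_le_one (fun s ↦ (e s : ℝ)) '' Icc 0 1
      = range fun s ↦ (e s : ℝ) := by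
        rw [IccExtend, image_comp, eq_univ_of_univ_subset (projIcc_surjOn zero_le_one), image_univ]
    _ = Icc 0 1 := (e.surjective.range_comp Subtype.val).trans Subtype.range_coe

lemma IsReparam.exists_toOrderIso_eq (e : unitInterval ≃o unitInterval) :
    ∃ (γ : ℝ → ℝ) (hγ : IsReparam γ), hγ.toOrderIso = e :=
  ⟨_, IsReparam.of_orderIso e, by
    ext s
    rw [IsReparam.coe_toOrderIso_apply, IccExtend_val]⟩

end Reparam

section FrechetDist

variable {d : ℕ} {f g h : ℝ → Pt d}

/-- The width `sup_{s ∈ [0,1]} ‖f(e(s)) - g(s)‖` of the matching of two curves by a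
reparametrization. Reparametrizations are encoded as order automorphisms of `[0,1]`, which are
automatically continuous, so that they can be inverted and composed. -/
def matchingWidth (f g : ℝ → Pt d) (e : unitInterval ≃o unitInterval) : ℝ :=
  ⨆ s : unitInterval, ‖f (e s) - g s‖

lemma matchingWidth_nonneg (e : unitInterval ≃o unitInterval) : 0 ≤ matchingWidth f g e :=
  Real.iSup_nonneg fun _ ↦ norm_nonneg _

lemma matchingWidth_symm (f g : ℝ → Pt d) (e : unitInterval ≃o unitInterval) :
    matchingWidth g f e.symm = matchingWidth f g e :=
  e.symm.toEquiv.iSup_congr fun s ↦ by simp [norm_sub_rev]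

lemma norm_sub_le_matchingWidth (hf : IsBounded (f '' Icc 0 1)) (hg : IsBounded (g '' Icc 0 1))
    (e : unitInterval ≃o unitInterval) (s : unitInterval) :
    ‖f (e s) - g s‖ ≤ matchingWidth f g e := by
  obtain ⟨C, hC⟩ := (hf.sub hg).exists_norm_le
  have hbdd : BddAbove (range fun s : unitInterval ↦ ‖f (e s) - g s‖) :=
    ⟨C, forall_mem_range.2 fun s ↦
      hC _ (sub_mem_sub (mem_image_of_mem f (e s).2) (mem_image_of_mem g s.2))⟩
  exact le_ciSup hbdd s

lemma matchingWidth_trans_le (hf : IsBounded (f '' Icc 0 1)) (hg : IsBounded (g '' Icc 0 1))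
    (hh : IsBounded (h '' Icc 0 1)) (e e' : unitInterval ≃o unitInterval) :
    matchingWidth f h (e'.trans e) ≤ matchingWidth f g e + matchingWidth g h e' :=
  ciSup_le fun s ↦ (norm_sub_le_norm_sub_add_norm_sub _ (g (e' s)) _).trans <|
    add_le_add (norm_sub_le_matchingWidth hf hg e (e' s)) (norm_sub_le_matchingWidth hg hh e' s)

lemma frechetDist_eq_iInf_matchingWidth (f g : ℝ → Pt d) :
    frechetDist f g = ⨅ e, matchingWidth f g e :=
  Function.Surjective.iInf_congr (fun γ : {γ // IsReparam γ} ↦ γ.2.toOrderIso)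
    (fun e ↦ let ⟨γ, hγ, he⟩ := IsReparam.exists_toOrderIso_eq e; ⟨⟨γ, hγ⟩, he⟩) fun _ ↦ rfl

lemma frechetDist_le_matchingWidth (f g : ℝ → Pt d) (e : unitInterval ≃o unitInterval) :
    frechetDist f g ≤ matchingWidth f g e :=
  (frechetDist_eq_iInf_matchingWidth f g).trans_le <|
    ciInf_le ⟨0, forall_mem_range.2 fun _ ↦ matchingWidth_nonneg _⟩ e

lemma frechetDist_comm (f g : ℝ → Pt d) : frechetDist f g = frechetDist g f := by
  simp only [frechetDist_eq_iInf_matchingWidth]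
  exact Function.Surjective.iInf_congr OrderIso.symm (fun e ↦ ⟨e.symm, e.symm_symm⟩)
    (matchingWidth_symm f g)

lemma frechetDist_triangle (hf : IsBounded (f '' Icc 0 1)) (hg : IsBounded (g '' Icc 0 1))
    (hh : IsBounded (h '' Icc 0 1)) :
    frechetDist f h ≤ frechetDist f g + frechetDist g h := by
  rw [frechetDist_eq_iInf_matchingWidth f g, frechetDist_eq_iInf_matchingWidth g h]
  exact le_ciInf_add_ciInf fun e e' ↦
    (frechetDist_le_matchingWidth f h _).trans (matchingWidth_trans_le hf hg hh e e')

end FrechetDist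

section Curves

variable {d : ℕ}

lemma image_subcurve_Icc (P : ℝ → Pt d) (a b : ℝ) :
    subcurve P a b '' Icc 0 1 = P '' uIcc a b := by
  rw [← segment_eq_uIcc, segment_eq_image', image_image]
  rfl

lemma isBounded_image_subcurve {P : ℝ → Pt d} (hP : IsBounded (P '' Icc 0 1)) {a b : ℝ}
    (ha : a ∈ Icc 0 1) (hb : b ∈ Icc 0 1) : IsBounded (subcurve P a b '' Icc 0 1) :=
  image_subcurve_Icc P a b ▸ hP.subset (image_mono (uIcc_subset_Icc ha hb))

lemma polyline_mem_convexHull {n : ℕ} (pts : Fin (n + 1) → Pt d) {s : ℝ} (hs : s ∈ Icc 0 1) :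
    polyline pts s ∈ convexHull ℝ (range pts) := by
  have hpts (i : Fin (n + 1)) : pts i ∈ convexHull ℝ (range pts) :=
    subset_convexHull ℝ _ (mem_range_self i)
  unfold polyline
  split_ifs with hn
  · exact hpts 0
  · have hlb : ((min ⌊s * n⌋₊ (n - 1) : ℕ) : ℝ) ≤ s * n :=
      (Nat.cast_le.2 (min_le_left _ _)).trans
        (Nat.floor_le (mul_nonneg hs.1 n.cast_nonneg))
    have hub : s * n ≤ (min ⌊s * n⌋₊ (n - 1) : ℕ) + 1 := by
      rcases min_choice ⌊s * n⌋₊ (n - 1) with hi | hi <;> rw [hi]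
      · exact (Nat.lt_floor_add_one _).le
      · rw [← Nat.cast_add_one, Nat.sub_add_cancel (Nat.one_le_iff_ne_zero.2 hn)]
        exact mul_le_of_le_one_left n.cast_nonneg hs.2
    exact convex_convexHull ℝ _ (hpts _) (hpts _) (by linarith) (by linarith) (by ring)

lemma IsPolygonal.isBounded_image {ℓ : ℕ} {f : ℝ → Pt d} (hf : IsPolygonal f ℓ) :
    IsBounded (f '' Icc 0 1) := by
  obtain ⟨n, -, pts, rfl⟩ := hf
  exact (isBounded_convexHull.2 (finite_range pts).isBounded).subset
    (image_subset_iff.2 fun _ hs ↦ polyline_mem_convexHull pts hs)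

end Curves

lemma mem_Icc_of_le_add_one {α : Type*} [Preorder α] {t : ℕ → α} {m : ℕ}
    (ht : ∀ i, 1 ≤ i → i < m → t i ≤ t (i + 1)) {i : ℕ} (hi : i ∈ Icc 1 m) :
    t i ∈ Icc (t 1) (t m) := by
  have hmono : MonotoneOn t (Icc 1 m) :=
    monotoneOn_of_le_add_one ordConnected_Icc fun i _ hi hi' ↦ ht i hi.1 hi'.2
  have hm : 1 ≤ m := hi.1.trans hi.2
  exact ⟨hmono (left_mem_Icc.2 hm) hi hi.1, hmono hi (right_mem_Icc.2 hm) hi.2⟩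

section SetSystems

variable {d m : ℕ} {P : ℝ → Pt d} {t : ℕ → ℝ} {Δ : ℝ} {μ : ℕ → ℕ → ℝ → Pt d}

lemma rSet_subset_rTilde0 (hP : IsBounded (P '' Icc 0 1)) (ht : ∀ i ∈ Icc 1 m, t i ∈ Icc 0 1)
    {Q : ℝ → Pt d} (hQ : IsBounded (Q '' Icc 0 1)) {i j : ℕ} (hi : i ∈ Icc 1 m) (hj : j ∈ Icc 1 m)
    (hμbdd : IsBounded (μ i j '' Icc 0 1)) (hQP : frechetDist Q (subcurve P (t i) (t j)) ≤ Δ)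
    (hμP : frechetDist (μ i j) (subcurve P (t i) (t j)) ≤ Δ) :
    rSet P m t Δ Q ⊆ rTilde0 P m t Δ μ i j := by
  rintro z ⟨hz, hzm, i', j', hi', hiz, hzj, hj', hQP'⟩
  refine ⟨hz, hzm, i', j', hi', hiz, hzj, hj', ?_⟩
  have hPij := isBounded_image_subcurve hP (ht i hi) (ht j hj)
  have hPij' := isBounded_image_subcurve hP (ht i' ⟨hi', by lia⟩) (ht j' ⟨by lia, hj'⟩)
  calc frechetDist (subcurve P (t i') (t j')) (μ i j)
      ≤ frechetDist (subcurve P (t i') (t j')) Q + frechetDist Q (μ i j) :=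
        frechetDist_triangle hPij' hQ hμbdd
    _ ≤ frechetDist (subcurve P (t i') (t j')) Q + (frechetDist Q (subcurve P (t i) (t j)) +
          frechetDist (subcurve P (t i) (t j)) (μ i j)) := by
        gcongr
        exact frechetDist_triangle hQ hPij hμbdd
    _ ≤ Δ + (Δ + Δ) := by
        gcongr
        · exact (frechetDist_comm _ _).trans_le hQP'
        · exact (frechetDist_comm _ _).trans_le hμP
    _ = 3 * Δ := by ring

lemma exists_rSet_subset_rTilde0 (hP : IsBounded (P '' Icc 0 1)) (hm : 2 ≤ m)
    (ht : ∀ i ∈ Icc 1 m, t i ∈ Icc 0 1) {Q : ℝ → Pt d} (hQ : IsBounded (Q '' Icc 0 1))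
    (hμbdd : ∀ i j, 1 ≤ i → i < j → j ≤ m → IsBounded (μ i j '' Icc 0 1))
    (hμ : ∀ i j, 1 ≤ i → i < j → j ≤ m → frechetDist Q (subcurve P (t i) (t j)) ≤ Δ →
      frechetDist (μ i j) (subcurve P (t i) (t j)) ≤ Δ) :
    ∃ i j, 1 ≤ i ∧ i < j ∧ j ≤ m ∧ rSet P m t Δ Q ⊆ rTilde0 P m t Δ μ i j := by
  rcases (rSet P m t Δ Q).eq_empty_or_nonempty with
    hempty | ⟨z, -, -, i, j, hi, hiz, hzj, hj, hQP⟩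
  · exact ⟨1, 2, le_rfl, one_lt_two, hm, hempty ▸ empty_subset _⟩
  · have hij : i < j := hiz.trans_lt hzj
    exact ⟨i, j, hi, hij, hj, rSet_subset_rTilde0 hP ht hQ ⟨hi, by lia⟩ ⟨by lia, hj⟩
      (hμbdd i j hi hij hj) hQP (hμ i j hi hij hj hQP)⟩

theorem stmt4_general (hP : IsBounded (P '' Icc 0 1)) (hm : 2 ≤ m)
    (ht : ∀ i ∈ Icc 1 m, t i ∈ Icc 0 1)
    {𝒞 : Set (ℝ → Pt d)} (h𝒞 : ∀ Q ∈ 𝒞, IsBounded (Q '' Icc 0 1))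
    (hμbdd : ∀ i j, 1 ≤ i → i < j → j ≤ m → IsBounded (μ i j '' Icc 0 1))
    (hμ : ∀ i j, 1 ≤ i → i < j → j ≤ m →
      (∃ Q ∈ 𝒞, frechetDist Q (subcurve P (t i) (t j)) ≤ Δ) →
      frechetDist (μ i j) (subcurve P (t i) (t j)) ≤ Δ) :
    (∀ Q ∈ 𝒞, ∃ i j, 1 ≤ i ∧ i < j ∧ j ≤ m ∧ rSet P m t Δ Q ⊆ rTilde0 P m t Δ μ i j) ∧
    ∀ (ι : Type*) (Qc : ι → ℝ → Pt d), (∀ s, Qc s ∈ 𝒞) →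
      (∀ z, 1 ≤ z → z < m → ∃ s, z ∈ rSet P m t Δ (Qc s)) →
      ∃ ij : ι → ℕ × ℕ,
        (∀ s, 1 ≤ (ij s).1 ∧ (ij s).1 < (ij s).2 ∧ (ij s).2 ≤ m) ∧
        ∀ z, 1 ≤ z → z < m → ∃ s, z ∈ rTilde0 P m t Δ μ (ij s).1 (ij s).2 := by
  have hsubset : ∀ Q ∈ 𝒞, ∃ i j, 1 ≤ i ∧ i < j ∧ j ≤ m ∧
      rSet P m t Δ Q ⊆ rTilde0 P m t Δ μ i j := fun Q hQ ↦
    exists_rSet_subset_rTilde0 hP hm ht (h𝒞 Q hQ) hμbdd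
      fun i j hi hij hj hQP ↦ hμ i j hi hij hj ⟨Q, hQ, hQP⟩
  refine ⟨hsubset, fun ι Qc hQc hcover ↦ ?_⟩
  choose i j hi hij hj hsub using fun s ↦ hsubset (Qc s) (hQc s)
  exact ⟨fun s ↦ (i s, j s), fun s ↦ ⟨hi s, hij s, hj s⟩,
    fun z hz hzm ↦ (hcover z hz hzm).imp fun s hs ↦ hsub s hs⟩

end SetSystems

/-- For every `Q ∈ 𝕏^d_ℓ` there are indices `1 ≤ i < j ≤ m` with
`r_Q ⊆ r_{i,j}`; consequently, a set cover of `R` of size `k` yields a set cover of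
`R̃₀` of size at most `k`. -/
theorem stmt4 {d ℓ : ℕ} (P : ℝ → Pt d) (hP : ContinuousOn P (Icc 0 1))
    (m : ℕ) (hm : 2 ≤ m) (t : ℕ → ℝ) (ht0 : t 1 = 0) (ht1 : t m = 1)
    (htmono : ∀ i, 1 ≤ i → i < m → t i < t (i + 1))
    (Δ : ℝ) (hΔ : 0 < Δ) (μ : ℕ → ℕ → ℝ → Pt d)
    (hμpoly : ∀ i j, 1 ≤ i → i < j → j ≤ m → IsPolygonal (μ i j) ℓ)
    (hμ : ∀ i j, 1 ≤ i → i < j → j ≤ m →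
      (∃ Q, IsPolygonal Q ℓ ∧ frechetDist Q (subcurve P (t i) (t j)) ≤ Δ) →
      frechetDist (μ i j) (subcurve P (t i) (t j)) ≤ Δ) :
    (∀ Q, IsPolygonal Q ℓ → ∃ i j, 1 ≤ i ∧ i < j ∧ j ≤ m ∧
      rSet P m t Δ Q ⊆ rTilde0 P m t Δ μ i j) ∧
    ∀ (k : ℕ) (Qc : Fin k → ℝ → Pt d), (∀ s, IsPolygonal (Qc s) ℓ) →
      (∀ z, 1 ≤ z → z < m → ∃ s, z ∈ rSet P m t Δ (Qc s)) →
      ∃ ij : Fin k → ℕ × ℕ,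
        (∀ s, 1 ≤ (ij s).1 ∧ (ij s).1 < (ij s).2 ∧ (ij s).2 ≤ m) ∧
        ∀ z, 1 ≤ z → z < m → ∃ s, z ∈ rTilde0 P m t Δ μ (ij s).1 (ij s).2 := by
  have ht : ∀ i ∈ Icc 1 m, t i ∈ Icc 0 1 := fun i hi ↦
    ht0 ▸ ht1 ▸ mem_Icc_of_le_add_one (fun i hi him ↦ (htmono i hi him).le) hi
  exact (stmt4_general (𝒞 := {Q | IsPolygonal Q ℓ})
    (isCompact_Icc.image_of_continuousOn hP).isBounded hm ht (fun _ hQ ↦ hQ.isBounded_image)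
    (fun i j hi hij hj ↦ (hμpoly i j hi hij hj).isBounded_image) hμ).imp_right fun h k ↦ h (Fin k)
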